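/- arXiv:1912.12944 — 3 statements merged into one kernel-verified Lean document; each statement's English description precedes it below -/
import Mathlib

section
/- Let 1 < p < ∞. If μ (with density w on the half-line) satisfies the A_p-condition far from 0, i.e., sup{ A_p(x,r) : x ∈ [0,∞), 0 < r ≤ 8x } < ∞, then μ is doubling: there exists a constant C_d > 0 such that μ(B(x,2r)) ≤ C_d μ(B(x,r)) for all x ∈ [0,∞) and all r > 0. (Claim 1 of Lemma 4.2 of the paper, for K = 1, λ ≡ 1.) -/
open MeasureTheory Set ENNReal

/-- The measure `dμ = w(t) dt` on the half-line `[0,∞)`. -/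
noncomputable def mu (w : ℝ → ℝ) : Measure ℝ :=
  (volume.withDensity (fun t => ENNReal.ofReal (w t))).restrict (Set.Ici 0)

/-- The ball `B(x,r) = {y ∈ [0,∞) : |x-y| < r}` viewed inside `ℝ`
(the restriction to `[0,∞)` is built into the measure `mu`). -/
def ball (x r : ℝ) : Set ℝ := Set.Ioo (x - r) (x + r)

/-- `g` is an upper gradient of `u` on the half-line:
`|u(b) - u(a)| ≤ ∫_a^b g(t) dt` whenever `0 ≤ a ≤ b`. -/
def UpperGradient (u : ℝ → ℝ) (g : ℝ → ℝ≥0∞) : Prop :=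
  ∀ a b : ℝ, 0 ≤ a → a ≤ b →
    ENNReal.ofReal |u b - u a| ≤ ∫⁻ t in Set.Icc a b, g t

/-- `A_p(x,r) = (μ([x̄, x̄+2r))/(2r)) · ((1/r)∫_x^{x+r} w(t)^{1/(1-p)} dt)^{p-1}`,
where `x̄ = max (x - r) 0`. -/
noncomputable def Ap (w : ℝ → ℝ) (p x r : ℝ) : ℝ≥0∞ :=
  (mu w (Set.Ico (max (x - r) 0) (max (x - r) 0 + 2 * r)) / ENNReal.ofReal (2 * r)) *
    ((ENNReal.ofReal r)⁻¹ *
      ∫⁻ t in Set.Icc x (x + r), ENNReal.ofReal (w t ^ (1 / (1 - p)))) ^ (p - 1)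

/-- `A_1(x,r) = (μ([x̄, x̄+2r))/(2r)) · esssup_{t ∈ [x,x+r]} 1/w(t)`,
where `x̄ = max (x - r) 0`. -/
noncomputable def A1 (w : ℝ → ℝ) (x r : ℝ) : ℝ≥0∞ :=
  (mu w (Set.Ico (max (x - r) 0) (max (x - r) 0 + 2 * r)) / ENNReal.ofReal (2 * r)) *
    essSup (fun t => ENNReal.ofReal (1 / w t)) (volume.restrict (Set.Icc x (x + r)))

/-- `μ` is doubling on the half-line. -/
def Doubling (w : ℝ → ℝ) : Prop :=
  ∃ C : ℝ, 0 < C ∧ ∀ x ∈ Set.Ici (0:ℝ), ∀ r : ℝ, 0 < r →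
    mu w (ball x (2 * r)) ≤ ENNReal.ofReal C * mu w (ball x r)

/-- `μ` supports a `(1,p)`-Poincaré inequality on the half-line. -/
def PoincareP (w : ℝ → ℝ) (p : ℝ) : Prop :=
  ∃ C : ℝ, 0 < C ∧ ∃ σ : ℝ, 1 ≤ σ ∧
    ∀ x ∈ Set.Ici (0:ℝ), ∀ r : ℝ, 0 < r →
    ∀ u : ℝ → ℝ, IntegrableOn u (ball x (σ * r)) (mu w) →
    ∀ g : ℝ → ℝ≥0∞, Measurable g → UpperGradient u g →
      ⨍ y in ball x r, |u y - ⨍ z in ball x r, u z ∂(mu w)| ∂(mu w) ≤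
        C * r * (((∫⁻ y in ball x (σ * r), g y ^ p ∂(mu w)) /
          mu w (ball x (σ * r))) ^ (1 / p)).toReal

/-- `μ` supports a `(1,1)`-Poincaré inequality on the half-line. -/
def Poincare1 (w : ℝ → ℝ) : Prop :=
  ∃ C : ℝ, 0 < C ∧ ∃ σ : ℝ, 1 ≤ σ ∧
    ∀ x ∈ Set.Ici (0:ℝ), ∀ r : ℝ, 0 < r →
    ∀ u : ℝ → ℝ, IntegrableOn u (ball x (σ * r)) (mu w) →
    ∀ g : ℝ → ℝ≥0∞, Measurable g → UpperGradient u g →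
      ⨍ y in ball x r, |u y - ⨍ z in ball x r, u z ∂(mu w)| ∂(mu w) ≤
        C * r * ((∫⁻ y in ball x (σ * r), g y ∂(mu w)) /
          mu w (ball x (σ * r))).toReal

/-- `μ` is `p`-admissible: doubling plus a `(1,p)`-Poincaré inequality. -/
def Admissible (w : ℝ → ℝ) (p : ℝ) : Prop := Doubling w ∧ PoincareP w p

/-- `μ` is `1`-admissible: doubling plus a `(1,1)`-Poincaré inequality. -/
def Admissible1 (w : ℝ → ℝ) : Prop := Doubling w ∧ Poincare1 w

/-!
For `x ≥ 0` and `r > 0` put `x' = x + r/2`, `R = 4r` and `E = (x + r/2, x + r)`. Then `R ≤ 8x'`, so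
the `A_p` bound applies at `(x', R)`; the interval of `A_p(x', R)` on which `μ` is evaluated contains
`B(x, 2r) ∩ [0,∞)`, while `E ⊆ B(x, r) ∩ [x', x' + R]`. Hölder's inequality applied to
`1 = w^(1/p) · w^(-1/p)` on `E` gives `|E|^p ≤ μ(E) · (∫_{[x', x' + R]} w^(1/(1-p)))^(p-1)`.
Multiplying it with the `A_p` bound yields `μ(B(x, 2r)) ≤ 2C (R/|E|)^p μ(E) ≤ 2 · 8^p · C · μ(B(x, r))`.
The computation takes place in `[0,∞]`, so neither integral needs to be finite.
-/

/-- Hölder's inequality for `1 = w^(1/p) · w^(-1/p)`, raised to the power `p`. -/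
lemma volume_rpow_le_lintegral_mul {w : ℝ → ℝ} {p : ℝ} (hp : 1 < p) {E : Set ℝ}
    (hE : MeasurableSet E) (hw : ∀ t ∈ E, 0 < w t)
    (hm : AEMeasurable w (volume.restrict E)) :
    volume E ^ p ≤ (∫⁻ t in E, ENNReal.ofReal (w t)) *
      (∫⁻ t in E, ENNReal.ofReal (w t ^ (1 / (1 - p)))) ^ (p - 1) := by
  have hp0 : 0 < p := by linarith
  have hp1 : p - 1 ≠ 0 := by linarith
  have hp1' : 1 - p ≠ 0 := by linarith
  have hpq : p.HolderConjugate (p / (p - 1)) := Real.HolderConjugate.conjExponent hp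
  have hH := ENNReal.lintegral_mul_le_Lp_mul_Lq (volume.restrict E) hpq
    (f := fun t => ENNReal.ofReal (w t) ^ (1 / p))
    (g := fun t => ENNReal.ofReal (w t) ^ (-(1 / p)))
    (hm.ennreal_ofReal.pow_const _) (hm.ennreal_ofReal.pow_const _)
  have h1 : ∫⁻ t in E, ((fun t => ENNReal.ofReal (w t) ^ (1 / p)) *
      fun t => ENNReal.ofReal (w t) ^ (-(1 / p))) t = volume E := by
    rw [← setLIntegral_one]
    refine setLIntegral_congr_fun hE fun t ht => ?_
    have : ENNReal.ofReal (w t) ≠ 0 := by simpa using hw t ht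
    simp only [Pi.mul_apply]
    rw [← ENNReal.rpow_add _ _ this ENNReal.ofReal_ne_top, add_neg_cancel, ENNReal.rpow_zero]
  have h2 : ∫⁻ t in E, (ENNReal.ofReal (w t) ^ (1 / p)) ^ p =
      ∫⁻ t in E, ENNReal.ofReal (w t) := by
    refine setLIntegral_congr_fun hE fun t _ => ?_
    rw [← ENNReal.rpow_mul, one_div_mul_cancel hp0.ne', ENNReal.rpow_one]
  have h3 : ∫⁻ t in E, (ENNReal.ofReal (w t) ^ (-(1 / p))) ^ (p / (p - 1)) =
      ∫⁻ t in E, ENNReal.ofReal (w t ^ (1 / (1 - p))) := by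
    refine setLIntegral_congr_fun hE fun t ht => ?_
    rw [← ENNReal.rpow_mul, ← ENNReal.ofReal_rpow_of_pos (hw t ht)]
    congr 1
    rw [← neg_sub p 1]
    field_simp
  rw [h1, h2, h3] at hH
  refine (ENNReal.rpow_le_rpow hH hp0.le).trans_eq ?_
  rw [ENNReal.mul_rpow_of_nonneg _ _ hp0.le, ← ENNReal.rpow_mul, ← ENNReal.rpow_mul,
    one_div_mul_cancel hp0.ne', ENNReal.rpow_one]
  congr 2
  field_simp

/-- The comparison of measures contained in an `A_p` bound: a set `E ⊆ [x, x + r]` carries a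
proportion of the `μ`-mass controlled from below by `(|E| / r)^p`. -/
lemma mu_mul_volume_rpow_le {w : ℝ → ℝ} (hw : ∀ x ∈ Set.Ici (0:ℝ), 0 < w x)
    (hloc : LocallyIntegrableOn w (Set.Ici 0)) {p : ℝ} (hp : 1 < p) {C : ℝ≥0∞} {x r : ℝ}
    (hx : 0 ≤ x) (hr : 0 < r) (hC : Ap w p x r ≤ C) {E : Set ℝ} (hE : MeasurableSet E)
    (hEs : E ⊆ Set.Icc x (x + r)) :
    mu w (Set.Ico (max (x - r) 0) (max (x - r) 0 + 2 * r)) * volume E ^ p ≤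
      2 * ENNReal.ofReal r ^ p * C * mu w E := by
  have hE0 : E ⊆ Set.Ici 0 := fun t ht => hx.trans (hEs ht).1
  have hmu : mu w E = ∫⁻ t in E, ENNReal.ofReal (w t) := by
    rw [mu, Measure.restrict_apply hE, inter_eq_left.2 hE0, withDensity_apply _ hE]
  have hm : AEMeasurable w (volume.restrict E) :=
    (hloc.aestronglyMeasurable.mono_measure (Measure.restrict_mono hE0 le_rfl)).aemeasurable
  have hH := volume_rpow_le_lintegral_mul hp hE (fun t ht => hw t (hE0 ht)) hm
  rw [← hmu] at hH
  have hJ : ∫⁻ t in E, ENNReal.ofReal (w t ^ (1 / (1 - p))) ≤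
      ∫⁻ t in Set.Icc x (x + r), ENNReal.ofReal (w t ^ (1 / (1 - p))) :=
    lintegral_mono_set hEs
  unfold Ap at hC
  set I := mu w (Set.Ico (max (x - r) 0) (max (x - r) 0 + 2 * r))
  set J := ∫⁻ t in Set.Icc x (x + r), ENNReal.ofReal (w t ^ (1 / (1 - p)))
  have hR0 : ENNReal.ofReal r ≠ 0 := by simpa using hr
  have h2R : ENNReal.ofReal (2 * r) = 2 * ENNReal.ofReal r := by
    rw [ENNReal.ofReal_mul (by norm_num)]; simp
  rw [h2R] at hC
  have hRt : ENNReal.ofReal r ≠ ⊤ := ENNReal.ofReal_ne_top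
  set R := ENNReal.ofReal r
  have hI : I = I / (2 * R) * (2 * R) :=
    (ENNReal.div_mul_cancel (mul_ne_zero two_ne_zero hR0)
      (ENNReal.mul_ne_top (by simp) hRt)).symm
  have hJR : J = R * (R⁻¹ * J) := by
    rw [← mul_assoc, ENNReal.mul_inv_cancel hR0 hRt, one_mul]
  have hRp : R * R ^ (p - 1) = R ^ p := by
    conv_lhs => rw [← ENNReal.rpow_one R, ← ENNReal.rpow_mul, one_mul]
    rw [← ENNReal.rpow_add _ _ hR0 hRt]
    congr 1
    ring
  have hp1 : 0 ≤ p - 1 := by linarith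
  calc I * volume E ^ p
      ≤ I * (mu w E * J ^ (p - 1)) := by
        gcongr
        exact hH.trans (by gcongr)
    _ = I / (2 * R) * (2 * R) * (mu w E * (R * (R⁻¹ * J)) ^ (p - 1)) := by
        rw [← hI, ← hJR]
    _ = 2 * (R * R ^ (p - 1)) * (I / (2 * R) * (R⁻¹ * J) ^ (p - 1)) * mu w E := by
        rw [ENNReal.mul_rpow_of_nonneg _ _ hp1]
        ring
    _ ≤ 2 * R ^ p * C * mu w E := by
        rw [hRp]
        gcongr

/-- For `1 < p < ∞`, if `μ = w dt` on the half-line satisfies the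
`A_p`-condition far from `0`, then `μ` is doubling. -/
theorem Ap_far_from_zero_implies_doubling
    (w : ℝ → ℝ) (hw : ∀ x ∈ Set.Ici (0:ℝ), 0 < w x)
    (hloc : LocallyIntegrableOn w (Set.Ici 0))
    (p : ℝ) (hp : 1 < p)
    (hAp : ∃ C : ℝ≥0∞, C ≠ ⊤ ∧ ∀ x ∈ Set.Ici (0:ℝ), ∀ r : ℝ, 0 < r → r ≤ 8 * x →
      Ap w p x r ≤ C) :
    Doubling w := by
  obtain ⟨C, hCt, hC⟩ := hAp
  refine ⟨2 * 8 ^ p * C.toReal + 1, by positivity, fun x hx r hr => ?_⟩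
  have hx0 : 0 ≤ x := hx
  have key := mu_mul_volume_rpow_le hw hloc hp (x := x + r / 2) (r := 4 * r)
    (by linarith) (by linarith)
    (hC (x + r / 2) (by simp only [mem_Ici]; linarith) (4 * r) (by linarith) (by linarith))
    (E := Set.Ioo (x + r / 2) (x + r)) measurableSet_Ioo
    (fun t ht => ⟨ht.1.le, by linarith [ht.2]⟩)
  have hbig : mu w (ball x (2 * r)) ≤ mu w (Set.Ico (max (x + r / 2 - 4 * r) 0)
      (max (x + r / 2 - 4 * r) 0 + 2 * (4 * r))) := by
    unfold mu ball
    rw [Measure.restrict_apply measurableSet_Ioo, Measure.restrict_apply measurableSet_Ico]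
    refine measure_mono fun t ht => ⟨⟨max_le ?_ ht.2, ?_⟩, ht.2⟩
    · linarith [ht.1.1]
    · linarith [ht.1.2, le_max_left (x + r / 2 - 4 * r) 0]
  have hsmall : mu w (Set.Ioo (x + r / 2) (x + r)) ≤ mu w (ball x r) :=
    measure_mono fun t ht => ⟨by linarith [ht.1], ht.2⟩
  have hvol : volume (Set.Ioo (x + r / 2) (x + r)) = ENNReal.ofReal (r / 2) := by
    rw [Real.volume_Ioo]; congr 1; ring
  have h4 : ENNReal.ofReal (4 * r) ^ p = 8 ^ p * ENNReal.ofReal (r / 2) ^ p := by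
    rw [← ENNReal.mul_rpow_of_nonneg _ _ (by linarith)]
    rw [show 4 * r = 8 * (r / 2) by ring, ENNReal.ofReal_mul (by norm_num)]
    simp
  rw [hvol, h4] at key
  have hAp0 : ENNReal.ofReal (r / 2) ^ p ≠ 0 := by
    simp [ENNReal.rpow_eq_zero_iff, ENNReal.ofReal_ne_top, hr]
  have hApt : ENNReal.ofReal (r / 2) ^ p ≠ ⊤ :=
    ENNReal.rpow_ne_top_of_nonneg (by linarith) ENNReal.ofReal_ne_top
  have hconst : 2 * 8 ^ p * C ≤ ENNReal.ofReal (2 * 8 ^ p * C.toReal + 1) := by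
    refine le_trans (le_of_eq ?_) (ENNReal.ofReal_le_ofReal (le_add_of_nonneg_right zero_le_one))
    rw [ENNReal.ofReal_mul (by positivity), ENNReal.ofReal_toReal hCt,
      ENNReal.ofReal_mul (by norm_num), ← ENNReal.ofReal_rpow_of_pos (by norm_num)]
    simp
  calc mu w (ball x (2 * r)) ≤ _ := hbig
    _ ≤ 2 * 8 ^ p * C * mu w (Set.Ioo (x + r / 2) (x + r)) := by
        rw [← ENNReal.mul_le_mul_iff_left hAp0 hApt]
        refine key.trans_eq ?_
        ring
    _ ≤ _ := by gcongr
end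

section
/- Let μ be the measure on [0,∞) with density w(x) = min{1, 1/x} with respect to Lebesgue measure. Then μ is not doubling: there is no constant C > 0 such that μ(B(x,2r)) ≤ C μ(B(x,r)) for all x ∈ [0,∞) and all r > 0. (Part of Example 4.7 of the paper.) -/
/-!
Doubling fails on the balls centred at `2R` as `R → ∞`: the ball of radius `R` is `(R, 3R)`,
of mass at most `2R · (1/R) = 2` (`mu_ball_small_le`), while the ball of radius `2R` is
`(0, 4R)`, of mass at least `∫₁^{4R} dt/t = log (4R)` (`log_le_mu_ball`), which is unbounded.
-/

open MeasureTheory Set ENNReal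

/-- The balls `B(2R, R) = (R, 3R)` have bounded mass: on them the density is at most `1/R`. -/
lemma mu_ball_small_le {R : ℝ} (hR : 1 ≤ R) :
    mu (fun x : ℝ => if x ≤ 1 then 1 else x⁻¹) (ball (2 * R) R) ≤ ENNReal.ofReal 2 := by
  have hR0 : 0 < R := by linarith
  calc mu (fun x : ℝ => if x ≤ 1 then 1 else x⁻¹) (ball (2 * R) R)
      ≤ (volume.withDensity (fun t : ℝ => ENNReal.ofReal (if t ≤ 1 then 1 else t⁻¹)))
          (ball (2 * R) R) := Measure.restrict_apply_le _ _
    _ = ∫⁻ t in ball (2 * R) R, ENNReal.ofReal (if t ≤ 1 then 1 else t⁻¹) :=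
        withDensity_apply _ measurableSet_Ioo
    _ ≤ ∫⁻ _ in ball (2 * R) R, ENNReal.ofReal R⁻¹ := by
        refine setLIntegral_mono measurable_const fun t ht => ENNReal.ofReal_le_ofReal ?_
        have h1 : R < t := by have := ht.1; linarith
        rw [if_neg (by linarith)]
        exact inv_anti₀ hR0 h1.le
    _ = ENNReal.ofReal 2 := by
        rw [setLIntegral_const, ball, Real.volume_Ioo, ← ENNReal.ofReal_mul (by positivity)]
        congr 1
        field_simp
        ring

/-- The doubled balls `B(2R, 2R) = (0, 4R)` contain `(1, 4R)`, whose mass is `log (4R)`. -/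
lemma log_le_mu_ball {R : ℝ} (hR : 1 ≤ R) :
    ENNReal.ofReal (Real.log (4 * R)) ≤
      mu (fun x : ℝ => if x ≤ 1 then 1 else x⁻¹) (ball (2 * R) (2 * R)) := by
  have hint : IntegrableOn (fun t : ℝ => t⁻¹) (Ioc 1 (4 * R)) := by
    rw [← intervalIntegrable_iff_integrableOn_Ioc_of_le (by linarith)]
    refine intervalIntegral.intervalIntegrable_inv (fun t ht => ?_) continuousOn_id
    rw [uIcc_of_le (by linarith)] at ht
    exact (zero_lt_one.trans_le ht.1).ne'
  calc ENNReal.ofReal (Real.log (4 * R))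
      = ENNReal.ofReal (∫ t in Ioc 1 (4 * R), t⁻¹) := by
        rw [← intervalIntegral.integral_of_le (by linarith),
          integral_inv_of_pos one_pos (by linarith), div_one]
    _ = ∫⁻ t in Ioc 1 (4 * R), ENNReal.ofReal t⁻¹ :=
        ofReal_integral_eq_lintegral_ofReal hint <|
          (ae_restrict_iff' measurableSet_Ioc).2 <| .of_forall fun t ht =>
            inv_nonneg.2 (zero_lt_one.trans ht.1).le
    _ = ∫⁻ t in Ioo 1 (4 * R), ENNReal.ofReal t⁻¹ := by rw [restrict_Ioo_eq_restrict_Ioc]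
    _ = ∫⁻ t in Ioo 1 (4 * R), ENNReal.ofReal (if t ≤ 1 then 1 else t⁻¹) :=
        setLIntegral_congr_fun measurableSet_Ioo fun t ht => by
          simp only [if_neg (not_le.2 ht.1)]
    _ ≤ ∫⁻ t in ball (2 * R) (2 * R) ∩ Ici 0, ENNReal.ofReal (if t ≤ 1 then 1 else t⁻¹) := by
        refine lintegral_mono_set fun t ht => ⟨⟨?_, ?_⟩, ?_⟩
        · linarith [ht.1]
        · linarith [ht.2]
        · exact (zero_lt_one.trans ht.1).le
    _ = mu (fun x : ℝ => if x ≤ 1 then 1 else x⁻¹) (ball (2 * R) (2 * R)) := by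
        rw [mu, ball, Measure.restrict_apply measurableSet_Ioo,
          withDensity_apply _ (measurableSet_Ioo.inter measurableSet_Ici)]

/-- The measure on `[0,∞)` with density `w(x) = min {1, 1/x}`
(with `w(0) = 1`) is not doubling. -/
theorem example_weight_not_doubling :
    ¬ ∃ C : ℝ, 0 < C ∧ ∀ x ∈ Set.Ici (0:ℝ), ∀ r : ℝ, 0 < r →
      mu (fun x : ℝ => if x ≤ 1 then 1 else x⁻¹) (ball x (2 * r)) ≤
        ENNReal.ofReal C *
          mu (fun x : ℝ => if x ≤ 1 then 1 else x⁻¹) (ball x r) := by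
  rintro ⟨C, hC, h⟩
  -- `R = exp (2C)` gives `log (4R) = log 4 + 2C > 2C`.
  have hR : 1 ≤ Real.exp (2 * C) := Real.one_le_exp (by positivity)
  have key := (log_le_mu_ball hR).trans <|
    (h (2 * Real.exp (2 * C)) (mem_Ici.2 (by positivity)) _ (Real.exp_pos _)).trans <|
      mul_le_mul_right (mu_ball_small_le hR) _
  rw [← ENNReal.ofReal_mul hC.le, ENNReal.ofReal_le_ofReal_iff (by positivity),
    Real.log_mul (by norm_num) (Real.exp_ne_zero _), Real.log_exp] at key
  linarith [Real.log_pos (show (1 : ℝ) < 4 by norm_num)]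
end

section
/- Let μ be the measure on [0,∞) with density w(x) = min{1, 1/x} with respect to Lebesgue measure, let 1 < p < ∞ and let 0 < c < 1. Then sup{ A_p(x,r) : x ∈ [0,∞), 0 < r ≤ c·x } < ∞. (Part of Example 4.7 of the paper: this measure satisfies the modified A_p-condition with constant c < 1 even though it is not doubling.) -/
/-! The weight `w = min {1, 1/x}` is antitone and positive. For `r ≤ c x` the factor
`μ([x-r, x+r)) / (2r)` is at most `w (x - r)`, and the factor with the dual weight is at most
`1 / w (x + r)`. Hence `A_p(x,r) ≤ w (x - r) / w (x + r)`, and as `0 < (1 - c) x ≤ x - r` and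
`x + r ≤ (1 + c) x`, this quotient is at most `(1 + c) / (1 - c)`, since `w s ≤ K w t` holds
whenever `1 ≤ K`, `0 < s` and `t ≤ K s`. -/

open MeasureTheory Set ENNReal

theorem weight_pos (t : ℝ) : 0 < (if t ≤ 1 then 1 else t⁻¹ : ℝ) := by
  split_ifs with h
  · exact one_pos
  · exact inv_pos.2 (by linarith)

theorem weight_antitone : Antitone (fun t : ℝ => if t ≤ 1 then 1 else t⁻¹) := by
  intro s t hst
  dsimp only
  split_ifs with h1 h2 h2
  · exact le_rfl
  · linarith
  · exact inv_le_one_of_one_le₀ (by linarith)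
  · exact inv_anti₀ (by linarith) hst

/-- The weight decreases by at most the factor `K` when its argument grows by at most the
factor `K`. -/
theorem weight_le_mul {K s t : ℝ} (hK : 1 ≤ K) (hs : 0 < s) (ht : t ≤ K * s) :
    (if s ≤ 1 then 1 else s⁻¹ : ℝ) ≤ K * (if t ≤ 1 then 1 else t⁻¹ : ℝ) := by
  split_ifs with h1 h2 h2
  · linarith
  · rw [← div_eq_mul_inv, le_div_iff₀ (by linarith)]
    nlinarith
  · exact (inv_le_one_of_one_le₀ (by linarith)).trans (by linarith)
  · rw [← div_eq_mul_inv, le_div_iff₀ (by linarith), inv_mul_le_iff₀ hs]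
    linarith

/-- For a positive antitone weight, the first factor of `A_p` is bounded by the value of the
weight at the left end of the ball and the second one by the reciprocal of its value at the
right end. -/
theorem Ap_le_of_antitone {w : ℝ → ℝ} (hw : Antitone w) (hpos : ∀ t, 0 < w t)
    {p x r : ℝ} (hp : 1 < p) (hr : 0 < r) (hrx : r ≤ x) :
    Ap w p x r ≤ ENNReal.ofReal (w (x - r) / w (x + r)) := by
  have hr0 : ENNReal.ofReal r ≠ 0 := by simpa using hr
  have h2r0 : ENNReal.ofReal (2 * r) ≠ 0 := by simpa using hr
  have h1 : mu w (Set.Ico (max (x - r) 0) (max (x - r) 0 + 2 * r)) / ENNReal.ofReal (2 * r)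
      ≤ ENNReal.ofReal (w (x - r)) := by
    rw [max_eq_left (by linarith)]
    refine ENNReal.div_le_of_le_mul ?_
    calc mu w (Set.Ico (x - r) (x - r + 2 * r))
        ≤ (volume.withDensity (fun t => ENNReal.ofReal (w t)))
            (Set.Ico (x - r) (x - r + 2 * r)) := Measure.restrict_apply_le _ _
      _ = ∫⁻ t in Set.Ico (x - r) (x - r + 2 * r), ENNReal.ofReal (w t) :=
          withDensity_apply _ measurableSet_Ico
      _ ≤ ∫⁻ _ in Set.Ico (x - r) (x - r + 2 * r), ENNReal.ofReal (w (x - r)) :=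
          setLIntegral_mono' measurableSet_Ico
            fun t ht => ENNReal.ofReal_le_ofReal (hw ht.1)
      _ = ENNReal.ofReal (w (x - r)) * ENNReal.ofReal (2 * r) := by
          rw [setLIntegral_const, Real.volume_Ico, add_sub_cancel_left]
  have h2 : (ENNReal.ofReal r)⁻¹ *
      ∫⁻ t in Set.Icc x (x + r), ENNReal.ofReal (w t ^ (1 / (1 - p)))
      ≤ ENNReal.ofReal (w (x + r) ^ (1 / (1 - p))) := by
    rw [mul_comm, ← div_eq_mul_inv]
    refine ENNReal.div_le_of_le_mul ?_
    calc ∫⁻ t in Set.Icc x (x + r), ENNReal.ofReal (w t ^ (1 / (1 - p)))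
        ≤ ∫⁻ _ in Set.Icc x (x + r), ENNReal.ofReal (w (x + r) ^ (1 / (1 - p))) :=
          setLIntegral_mono' measurableSet_Icc fun t ht => ENNReal.ofReal_le_ofReal
            (Real.rpow_le_rpow_of_nonpos (hpos _) (hw ht.2)
              (one_div_nonpos.2 (by linarith)))
      _ = ENNReal.ofReal (w (x + r) ^ (1 / (1 - p))) * ENNReal.ofReal r := by
          rw [setLIntegral_const, Real.volume_Icc, add_sub_cancel_left]
  have h3 : ENNReal.ofReal (w (x + r) ^ (1 / (1 - p))) ^ (p - 1)
      = ENNReal.ofReal (w (x + r))⁻¹ := by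
    rw [ENNReal.ofReal_rpow_of_pos (Real.rpow_pos_of_pos (hpos _) _),
      ← Real.rpow_mul (hpos _).le, ← Real.rpow_neg_one]
    congr 2
    have : 1 - p ≠ 0 := by linarith
    field_simp
    ring
  rw [Ap, div_eq_mul_inv (w _), ENNReal.ofReal_mul (hpos _).le, ← h3]
  exact mul_le_mul' h1 (ENNReal.rpow_le_rpow h2 (by linarith))

/-- For the measure on `[0,∞)` with density `w(x) = min {1, 1/x}`
(with `w(0) = 1`), for `1 < p < ∞` and `0 < c < 1`, one has
`sup { A_p(x,r) : x ∈ [0,∞), 0 < r ≤ c x } < ∞`. -/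
theorem example_weight_Ap_condition
    (p : ℝ) (hp : 1 < p) (c : ℝ) (hc0 : 0 < c) (hc1 : c < 1) :
    ∃ C : ℝ≥0∞, C ≠ ⊤ ∧ ∀ x ∈ Set.Ici (0:ℝ), ∀ r : ℝ, 0 < r → r ≤ c * x →
      Ap (fun x : ℝ => if x ≤ 1 then 1 else x⁻¹) p x r ≤ C := by
  have h1c : 0 < 1 - c := by linarith
  refine ⟨ENNReal.ofReal ((1 + c) / (1 - c)), ENNReal.ofReal_ne_top, fun x _ r hr hrx => ?_⟩
  have hx : 0 < x := pos_of_mul_pos_right (hr.trans_le hrx) hc0.le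
  refine (Ap_le_of_antitone weight_antitone weight_pos hp hr (by nlinarith)).trans
    (ENNReal.ofReal_le_ofReal ?_)
  rw [div_le_iff₀ (weight_pos _)]
  refine weight_le_mul ((one_le_div h1c).2 (by linarith)) (by nlinarith) ?_
  rw [div_mul_eq_mul_div, le_div_iff₀ h1c]
  nlinarith
end
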